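/- There is a variety in a finite algebraic signature, defined by a recursive set of laws involving only constants (i.e., a recursive set of equations between closed terms, containing no variables), which has solvable but not uniformly solvable word problem: for every finite presentation 𝒫 the relation θ_𝒫 is decidable, but there is no single algorithm which, given a finite presentation 𝒫 and terms s,t, decides whether (s,t) ∈ θ_𝒫. -/

import Mathlib

/-!
The variety is defined by all closed equations that hold in one computable algebra. Its elements
are `⊥` and `e(n, i)` for `n, i ∈ ℕ`. It has a constant `e(0, 0)`, three unary operations fixing
`⊥` and sending `e(n, i)` to `e(n, i + 1)`, to `e(n + 1, 0)`, and to `e(n, 0)` or `⊥` according to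
whether program `n` halts within `i` steps, and a binary operation `d` with `d(x, x) = ⊥` and
`d(x, y) = x` for `x ≠ y`. A closed equation is a law exactly when both sides evaluate to the same
element, so the laws are recursive (`laws_decidable`).

Because of `d`, a presentation which identifies closed terms with distinct values identifies both
with `⊥` (`mem_kill_of_ne`). On closed terms the congruence is therefore determined by the set of
elements identified with `⊥` (`presEqv_cl_iff`). This set is closed under the unary operations, so
apart from `⊥` it is a final segment in the lexicographic order of the pairs `(n, i)`, and hence
decidable (`primrecPred_mem`): the data needed are one pair, which exists but need not be computable
from the presentation. The laws have no variables, so they say nothing about terms that are not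
closed: up to equivalence of arguments, and apart from closed terms, variables and the finitely many
terms in the relations, the congruence relates only terms with the same outermost symbol and
equivalent arguments (`head_cases`). Thus
normal forms are computed recursively along a term, using the decidable set above and a finite table
for the terms in the relations (`nf_func`), and for each presentation the word problem is solvable
(`laws_solvable`).

For the failure of uniformity, take no generators and the single relation `e(n, 1) = ⊥`. Then all
`e(n, i)` with `i ≥ 1` become `⊥`. If program `n` halts, the third unary operation carries one of
them to `e(n, 0)`, which becomes `⊥` as well; if it does not halt, the elements from `e(n, 1)`
onwards can be collapsed to `⊥` with no further effect. So `e(n, 0) = ⊥` holds if and only if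
program `n` halts (`presEqv_iff_halts`), and a uniform algorithm would solve the halting problem.
-/

open FirstOrder Language

/-- The congruence on the absolutely free algebra (term algebra) `L.Term X` generated by a set
`R` of relations together with all substitution instances of a set `E` of laws (equations between
terms with variables from `ℕ`). -/
inductive PresEqv {L : FirstOrder.Language} {X : Type*}
    (E : Set (L.Term ℕ × L.Term ℕ)) (R : Set (L.Term X × L.Term X)) :
    L.Term X → L.Term X → Prop
  | rel {s t : L.Term X} : (s, t) ∈ R → PresEqv E R s t
  | law (p : L.Term ℕ × L.Term ℕ) (σ : ℕ → L.Term X) :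
      p ∈ E → PresEqv E R (p.1.subst σ) (p.2.subst σ)
  | refl (t : L.Term X) : PresEqv E R t t
  | symm {s t : L.Term X} : PresEqv E R s t → PresEqv E R t s
  | trans {s t u : L.Term X} : PresEqv E R s t → PresEqv E R t u → PresEqv E R s u
  | app {n : ℕ} (f : L.Functions n) (ts us : Fin n → L.Term X) :
      (∀ i, PresEqv E R (ts i) (us i)) →
      PresEqv E R (Term.func f ts) (Term.func f us)

/-- A binary relation on an encodable type is decidable (relative to the encoding) if some
computable boolean function decides it on codes. -/
def DecidableRelVia {α : Type*} [Encodable α] (r : α → α → Prop) : Prop :=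
  ∃ f : ℕ → Bool, Computable f ∧
    ∀ a b : α, r a b ↔ f (Nat.pair (Encodable.encode a) (Encodable.encode b)) = true

/-- A set of an encodable type is decidable (relative to the encoding). -/
def DecidableSetVia {α : Type*} [Encodable α] (s : Set α) : Prop :=
  ∃ f : ℕ → Bool, Computable f ∧ ∀ a : α, a ∈ s ↔ f (Encodable.encode a) = true

/-- The variety with laws `E` has uniformly solvable word problem: a single algorithm decides,
given a finite presentation (finitely many generators `Fin k` and a finite list `R` of relations)
and a pair of terms, whether the pair lies in the congruence `θ_𝒫`. -/
def UniformWP (L : FirstOrder.Language) [∀ k : ℕ, Encodable (L.Term (Fin k))]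
    (E : Set (L.Term ℕ × L.Term ℕ)) : Prop :=
  ∃ f : ℕ → Bool, Computable f ∧
    ∀ (k : ℕ) (R : List (L.Term (Fin k) × L.Term (Fin k))) (s t : L.Term (Fin k)),
      PresEqv E {p | p ∈ R} s t ↔
        f (Encodable.encode
            (⟨k, (R, s, t)⟩ : Σ k : ℕ,
              List (L.Term (Fin k) × L.Term (Fin k)) × L.Term (Fin k) × L.Term (Fin k))) = true

/-- The variety with laws `E` has solvable word problem: for each finite presentation the
congruence `θ_𝒫` is decidable. -/
def SolvableWP (L : FirstOrder.Language) [∀ k : ℕ, Encodable (L.Term (Fin k))]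
    (E : Set (L.Term ℕ × L.Term ℕ)) : Prop :=
  ∀ (k : ℕ) (R : List (L.Term (Fin k) × L.Term (Fin k))),
    DecidableRelVia (PresEqv E {p | p ∈ R})

/-- The finite algebraic signature with `N` operation symbols of arities `ar`. -/
def FinLang (N : ℕ) (ar : Fin N → ℕ) : FirstOrder.Language :=
  ⟨fun n => {i : Fin N // ar i = n}, fun _ => Empty⟩

instance (N : ℕ) (ar : Fin N → ℕ) (X : Type*) [Encodable X] :
    Encodable ((FinLang N ar).Term X) :=
  inferInstanceAs (Encodable (Language.Term ⟨fun n => {i : Fin N // ar i = n}, fun _ => Empty⟩ X))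

/-- A term is closed (involves only constants and operations, no variables) if it is the
relabelling of a term with variables from `Empty`. -/
def IsClosedTerm {L : FirstOrder.Language} {X : Type*} (t : L.Term X) : Prop :=
  ∃ s : L.Term Empty, t = s.relabel (fun e => e.elim)

/-! ### Evaluating terms from their codes -/

namespace ConstLaws

section Eval

variable {N : ℕ} {ar : Fin N → ℕ}

/-- The index of an operation symbol. -/
def sym {n : ℕ} (f : (FinLang N ar).Functions n) : Fin N :=
  Subtype.val (p := fun i => ar i = n) f

theorem ar_sym {n : ℕ} (f : (FinLang N ar).Functions n) : ar (sym f) = n :=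
  Subtype.property (p := fun i => ar i = n) f

theorem sym_inj {n : ℕ} {f g : (FinLang N ar).Functions n} (h : (sym f : ℕ) = sym g) : f = g :=
  Subtype.ext (p := fun i => ar i = n) (Fin.ext h)

/-- The value of a term in `ℕ`, where `F o` interprets the `o`-th operation symbol (applied to
the list of values of the arguments) and `G` interprets the codes of the variables. -/
def evalT {X : Type*} [Encodable X] (F : ℕ → List ℕ → ℕ) (G : ℕ → ℕ) :
    (FinLang N ar).Term X → ℕ
  | .var x => G (Encodable.encode x)
  | .func f ts => F (sym f) (List.ofFn fun i => evalT F G (ts i))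

/-- The numerical token of a letter in the prefix-notation encoding of terms: `2 * x` for a
variable, `2 * ⟨arity, index⟩ + 1` for an operation symbol. -/
def tok {X : Type*} [Encodable X] : X ⊕ (Σ i, (FinLang N ar).Functions i) → ℕ
  | .inl x => 2 * Encodable.encode x
  | .inr f => 2 * Nat.pair f.1 (sym f.2) + 1

theorem encode_term {X : Type*} [Encodable X] (t : (FinLang N ar).Term X) :
    Encodable.encode t = Encodable.encode (t.listEncode.map tok) := by
  have key : ∀ l : List (X ⊕ (Σ i, (FinLang N ar).Functions i)),
      @Encodable.encode (List (X ⊕ (Σ i : ℕ, {j : Fin N // ar j = i}))) _ l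
        = Encodable.encode (l.map tok) := by
    intro l
    induction l with
    | nil => rfl
    | cons a l ih =>
      rw [List.map_cons, Encodable.encode_list_cons]
      refine (Encodable.encode_list_cons
        (α := X ⊕ (Σ i : ℕ, {j : Fin N // ar j = i})) a l).trans ?_
      rw [ih]
      rcases a with a | ⟨n, f⟩ <;> rfl
  exact key _

/-- One step of the stack machine reading a term in prefix notation from right to left. -/
def step (F : ℕ → List ℕ → ℕ) (G : ℕ → ℕ) (τ : ℕ) (st : List ℕ) : List ℕ :=
  if τ % 2 = 0 then G (τ / 2) :: st
  else F (τ / 2).unpair.2 (st.take (τ / 2).unpair.1) :: st.drop (τ / 2).unpair.1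

theorem foldr_step {X : Type*} [Encodable X] (F : ℕ → List ℕ → ℕ) (G : ℕ → ℕ)
    (t : (FinLang N ar).Term X) : ∀ st : List ℕ,
      (t.listEncode.map tok).foldr (step F G) st = evalT F G t :: st := by
  induction t with
  | var x =>
    intro st
    simp [Term.listEncode, tok, step, evalT]
  | @func n f ts ih =>
    intro st
    have key : ∀ l : List (Fin n),
        ((l.flatMap fun i => (ts i).listEncode).map tok).foldr (step F G) st
          = l.map (fun i => evalT F G (ts i)) ++ st := by
      intro l
      induction l with
      | nil => rfl
      | cons i l ihl =>
        rw [List.flatMap_cons, List.map_append, List.foldr_append, ihl, ih]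
        rfl
    have hd : (2 * Nat.pair n (sym f) + 1) / 2 = Nat.pair n (sym f) := by omega
    have hm : ¬ (2 * Nat.pair n (sym f) + 1) % 2 = 0 := by omega
    have hl : ((List.finRange n).map fun i => evalT F G (ts i))
        = List.ofFn fun i => evalT F G (ts i) := by simp [List.ofFn_eq_map]
    have hlen : (List.ofFn fun i => evalT F G (ts i)).length = n := by simp
    rw [Term.listEncode, List.map_cons, List.foldr_cons, key, hl]
    simp only [tok, step, if_neg hm, hd, Nat.unpair_pair, evalT]
    rw [List.take_left' hlen, List.drop_left' hlen]

theorem primrec_step {F : ℕ → List ℕ → ℕ} {G : ℕ → ℕ} (hF : Primrec₂ F) (hG : Primrec G) :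
    Primrec₂ (step F G) := by
  have h2 : Primrec fun p : ℕ × List ℕ => p.1 / 2 :=
    Primrec.nat_div.comp Primrec.fst (Primrec.const 2)
  have hu1 : Primrec fun p : ℕ × List ℕ => (p.1 / 2).unpair.1 :=
    Primrec.fst.comp (Primrec.unpair.comp h2)
  have hu2 : Primrec fun p : ℕ × List ℕ => (p.1 / 2).unpair.2 :=
    Primrec.snd.comp (Primrec.unpair.comp h2)
  refine Primrec.ite (c := fun p : ℕ × List ℕ => p.1 % 2 = 0) ?_ ?_ ?_
  · exact Primrec.eq.comp (Primrec.nat_mod.comp Primrec.fst (Primrec.const 2)) (Primrec.const 0)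
  · exact Primrec.list_cons.comp (hG.comp h2) Primrec.snd
  · exact Primrec.list_cons.comp
      (hF.comp hu2 (Primrec.list_take.comp hu1 Primrec.snd))
      (Primrec.list_drop.comp hu1 Primrec.snd)

/-- Evaluation of terms by primitive recursive operations is primitive recursive on codes. -/
theorem exists_primrec_evalT (X : Type*) [Encodable X] {F : ℕ → List ℕ → ℕ} {G : ℕ → ℕ}
    (hF : Primrec₂ F) (hG : Primrec G) :
    ∃ φ : ℕ → ℕ, Primrec φ ∧
      ∀ t : (FinLang N ar).Term X, φ (Encodable.encode t) = evalT F G t := by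
  refine ⟨fun m => (((Encodable.decode (α := List ℕ) m).getD []).foldr (step F G) []).headI,
    ?_, ?_⟩
  · refine Primrec.list_headI.comp (Primrec.list_foldr
      (h := fun _ p => step F G p.1 p.2) (Primrec.option_getD.comp Primrec.decode (Primrec.const [])) (Primrec.const []) ?_)
    exact (primrec_step hF hG).comp₂ (Primrec.fst.comp₂ Primrec₂.right)
      (Primrec.snd.comp₂ Primrec₂.right)
  · intro t
    simp only [encode_term t, Encodable.encodek, Option.getD_some, foldr_step, List.headI_cons]

end Eval

/-! ### The algebra and its laws -/

/-- The step-bounded halting predicate: program `n` halts on input `0` within the bound `i`. -/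
def halts (n i : ℕ) : Bool :=
  (Nat.Partrec.Code.evaln i (Denumerable.ofNat Nat.Partrec.Code n) 0).isSome

theorem halts_mono {n i j : ℕ} (hij : i ≤ j) (h : halts n i = true) : halts n j = true := by
  obtain ⟨x, hx⟩ := Option.isSome_iff_exists.1 h
  exact Option.isSome_iff_exists.2 ⟨x, Nat.Partrec.Code.evaln_mono hij hx⟩

theorem exists_halts_iff (n : ℕ) : (∃ i, halts n i = true) ↔
    (Nat.Partrec.Code.eval (Denumerable.ofNat Nat.Partrec.Code n) 0).Dom := by
  rw [Part.dom_iff_mem]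
  constructor
  · rintro ⟨i, hi⟩
    obtain ⟨x, hx⟩ := Option.isSome_iff_exists.1 hi
    exact ⟨x, Nat.Partrec.Code.evaln_sound hx⟩
  · rintro ⟨x, hx⟩
    obtain ⟨i, hi⟩ := Nat.Partrec.Code.evaln_complete.1 hx
    exact ⟨i, Option.isSome_iff_exists.2 ⟨x, hi⟩⟩

/-- The nonzero element `e(n, i)` of the algebra, whose carrier is `ℕ`; the number `0` is the
absorbing element `⊥`. -/
def el (n i : ℕ) : ℕ := Nat.pair n i + 1

theorem el_inj {n i m j : ℕ} : el n i = el m j ↔ n = m ∧ i = j := by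
  simp [el, Nat.pair_eq_pair]

theorem el_ne_zero (n i : ℕ) : el n i ≠ 0 := Nat.succ_ne_zero _

theorem eq_zero_or_el (x : ℕ) : x = 0 ∨ ∃ n i, x = el n i := by
  rcases x with _ | x
  · exact Or.inl rfl
  · exact Or.inr ⟨x.unpair.1, x.unpair.2, by simp [el]⟩

/-- The operations of the algebra, by index: `0` is the constant `e(0, 0)`; `1`, `2`, `3` are
unary, fix `⊥`, and send `e(n, i)` to `e(n, i + 1)`, to `e(n + 1, 0)`, and to `e(n, 0)` or `⊥`
according to whether program `n` halts within `i` steps; `4` is the binary operation `d` with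
`d(x, x) = ⊥` and `d(x, y) = x` for `x ≠ y`. -/
def opA (o : ℕ) (l : List ℕ) : ℕ :=
  if o = 0 then el 0 0
  else if o = 4 then (if l.getD 0 0 = l.getD 1 0 then 0 else l.getD 0 0)
  else if l.getD 0 0 = 0 then 0
  else if o = 1 then el (l.getD 0 0 - 1).unpair.1 ((l.getD 0 0 - 1).unpair.2 + 1)
  else if o = 2 then el ((l.getD 0 0 - 1).unpair.1 + 1) 0
  else if halts (l.getD 0 0 - 1).unpair.1 (l.getD 0 0 - 1).unpair.2 = true then
    el (l.getD 0 0 - 1).unpair.1 0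
  else 0

theorem primrec_halts : Primrec₂ halts :=
  Primrec.option_isSome.comp (Nat.Partrec.Code.primrec_evaln.comp
    (Primrec.pair (Primrec.pair Primrec.snd ((Primrec.ofNat _).comp Primrec.fst))
      (Primrec.const 0)))

theorem primrec_el : Primrec₂ el :=
  Primrec.succ.comp (Primrec₂.natPair.comp Primrec.fst Primrec.snd)

theorem primrec_opA : Primrec₂ opA := by
  have hx : Primrec fun p : ℕ × List ℕ => p.2.getD 0 0 :=
    (Primrec.list_getD 0).comp Primrec.snd (Primrec.const 0)
  have hy : Primrec fun p : ℕ × List ℕ => p.2.getD 1 0 :=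
    (Primrec.list_getD 0).comp Primrec.snd (Primrec.const 1)
  have hu : Primrec fun p : ℕ × List ℕ => (p.2.getD 0 0 - 1).unpair :=
    Primrec.unpair.comp (Primrec.nat_sub.comp hx (Primrec.const 1))
  have hn := Primrec.fst.comp hu
  have hi := Primrec.snd.comp hu
  have ho : ∀ c : ℕ, PrimrecPred fun p : ℕ × List ℕ => p.1 = c := fun c =>
    Primrec.eq.comp Primrec.fst (Primrec.const c)
  refine Primrec.ite (ho 0) (Primrec.const _) ?_
  refine Primrec.ite (ho 4) (Primrec.ite (Primrec.eq.comp hx hy) (Primrec.const 0) hx) ?_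
  refine Primrec.ite (Primrec.eq.comp hx (Primrec.const 0)) (Primrec.const 0) ?_
  refine Primrec.ite (ho 1) (primrec_el.comp hn (Primrec.succ.comp hi)) ?_
  refine Primrec.ite (ho 2) (primrec_el.comp (Primrec.succ.comp hn) (Primrec.const 0)) ?_
  exact Primrec.ite (Primrec.eq.comp (primrec_halts.comp hn hi) (Primrec.const true))
    (primrec_el.comp hn (Primrec.const 0)) (Primrec.const 0)

theorem opA_zero (o : ℕ) (h : o = 1 ∨ o = 2 ∨ o = 3) : opA o [0] = 0 := by
  rcases h with rfl | rfl | rfl <;> simp [opA]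

theorem opA_f (n i : ℕ) : opA 1 [el n i] = el n (i + 1) := by simp [opA, el]

theorem opA_g (n i : ℕ) : opA 2 [el n i] = el (n + 1) 0 := by simp [opA, el]

theorem opA_h (n i : ℕ) : opA 3 [el n i] = if halts n i = true then el n 0 else 0 := by
  simp [opA, el]

theorem opA_d (x y : ℕ) : opA 4 [x, y] = if x = y then 0 else x := by simp [opA]

/-- The arities of the five operation symbols. -/
def ar5 : Fin 5 → ℕ := ![0, 1, 1, 1, 2]

/-- The signature: one constant, three unary symbols and one binary symbol. -/
abbrev L5 : FirstOrder.Language := FinLang 5 ar5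

section Terms

variable {X : Type*}

/-- The term consisting of the constant. -/
def tC : L5.Term X :=
  Term.func (l := 0) (show L5.Functions 0 from (⟨0, rfl⟩ : {i : Fin 5 // ar5 i = 0})) ![]

/-- The unary symbol with index `o + 1`, for `o = 0, 1, 2`. -/
def uSym (o : Fin 3) : L5.Functions 1 :=
  (⟨o.succ.castSucc, by fin_cases o <;> rfl⟩ : {i : Fin 5 // ar5 i = 1})

/-- Application of the `o`-th unary symbol, for `o = 0, 1, 2`. -/
def tU (o : Fin 3) (t : L5.Term X) : L5.Term X := Term.func (uSym o) fun _ => t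

/-- Application of the binary symbol. -/
def tD (s t : L5.Term X) : L5.Term X :=
  Term.func (l := 2) (show L5.Functions 2 from (⟨4, rfl⟩ : {i : Fin 5 // ar5 i = 2})) ![s, t]

/-- A closed term denoting `⊥`. -/
def tB : L5.Term X := tD tC tC

/-- A term without variables, viewed as a term over `X`. -/
def cl (s : L5.Term Empty) : L5.Term X := s.relabel fun e => e.elim

theorem cl_tC : cl tC = (tC : L5.Term X) := by
  simp only [cl, tC, Term.relabel]
  congr 1
  funext i
  exact i.elim0

theorem cl_tU (o : Fin 3) (s : L5.Term Empty) : cl (tU o s) = (tU o (cl s) : L5.Term X) := rfl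

theorem cl_tD (s t : L5.Term Empty) : cl (tD s t) = (tD (cl s) (cl t) : L5.Term X) := by
  simp only [cl, tD, Term.relabel]
  congr 1
  funext i
  fin_cases i <;> rfl

theorem cl_tB : cl tB = (tB : L5.Term X) := by rw [tB, cl_tD, cl_tC]; rfl

theorem cl_subst (s : L5.Term Empty) (σ : ℕ → L5.Term X) : (cl s).subst σ = cl s := by
  induction s with
  | var x => exact x.elim
  | func f ts ih =>
    change Term.func f (fun i => (cl (ts i)).subst σ) = Term.func f fun i => cl (ts i)
    exact congrArg _ (funext ih)

variable [Encodable X]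

/-- The value of a term in the algebra, all variables being sent to `⊥`. -/
def val (t : L5.Term X) : ℕ := evalT opA (fun _ => 0) t

theorem evalT_cl (F : ℕ → List ℕ → ℕ) (G : ℕ → ℕ) (s : L5.Term Empty) :
    evalT F G (cl s : L5.Term X) = evalT F G s := by
  induction s with
  | var x => exact x.elim
  | func f ts ih =>
    change F _ (List.ofFn fun i => evalT F G (cl (ts i) : L5.Term X)) = F _ _
    rw [funext ih]

theorem val_cl (s : L5.Term Empty) : val (cl s : L5.Term X) = val s := evalT_cl _ _ s

theorem val_tC : val (tC : L5.Term X) = el 0 0 := rfl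

theorem val_tU (o : Fin 3) (t : L5.Term X) : val (tU o t) = opA (o + 1) [val t] := rfl

theorem val_tD (s t : L5.Term X) : val (tD s t) = if val s = val t then 0 else val s :=
  opA_d _ _

theorem val_tB : val (tB : L5.Term X) = 0 := by simp [tB, val_tD]

end Terms

/-- The laws: all equations between closed terms that hold in the algebra. -/
def laws : Set (L5.Term ℕ × L5.Term ℕ) :=
  {p | ∃ s t : L5.Term Empty, val s = val t ∧ p = (cl s, cl t)}

theorem laws_closed (p : L5.Term ℕ × L5.Term ℕ) (hp : p ∈ laws) :
    IsClosedTerm p.1 ∧ IsClosedTerm p.2 := by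
  obtain ⟨s, t, -, rfl⟩ := hp
  exact ⟨⟨s, rfl⟩, ⟨t, rfl⟩⟩

/-- The number of occurrences of variables in a term. -/
def nvars {X : Type*} [Encodable X] (t : L5.Term X) : ℕ :=
  evalT (fun _ l => l.foldr (· + ·) 0) (fun _ => 1) t

theorem nvars_cl {X : Type*} [Encodable X] (s : L5.Term Empty) : nvars (cl s : L5.Term X) = 0 := by
  rw [nvars, evalT_cl]
  induction s with
  | var x => exact x.elim
  | func f ts ih =>
    simp only [evalT, ih]
    have hrep : ∀ m : ℕ, (List.replicate m 0).foldr (· + ·) 0 = 0 := by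
      intro m
      induction m with
      | zero => rfl
      | succ m ihm => simpa [List.replicate_succ] using ihm
    rw [List.ofFn_const, hrep]

theorem exists_cl_of_nvars {X : Type*} [Encodable X] (t : L5.Term X) (h : nvars t = 0) :
    ∃ s : L5.Term Empty, t = cl s := by
  induction t with
  | var x => simp [nvars, evalT] at h
  | func f ts ih =>
    have hz : ∀ l : List ℕ, l.foldr (· + ·) 0 = 0 → ∀ a ∈ l, a = 0 := by
      intro l
      induction l with
      | nil => simp
      | cons b l ihl => intro h; simp at h ⊢; simpa [h.1] using ihl h.2
    have h' : ∀ i, nvars (ts i) = 0 := fun i =>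
      hz _ h _ ((List.mem_ofFn' _ _).2 ⟨i, rfl⟩)
    choose s hs using fun i => ih i (h' i)
    exact ⟨Term.func f s, by rw [funext hs]; rfl⟩

theorem laws_decidable : DecidableSetVia laws := by
  obtain ⟨φ, hφ, hφ'⟩ := exists_primrec_evalT (N := 5) (ar := ar5) ℕ primrec_opA
    (Primrec.const 0 : Primrec fun _ : ℕ => 0)
  obtain ⟨ψ, hψ, hψ'⟩ := exists_primrec_evalT (N := 5) (ar := ar5) ℕ
    (F := fun _ l => l.foldr (· + ·) 0)
    (Primrec.list_foldr (h := fun _ p => p.1 + p.2) Primrec.snd (Primrec.const 0)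
      (Primrec.nat_add.comp (Primrec.fst.comp Primrec.snd) (Primrec.snd.comp Primrec.snd)))
    (Primrec.const 1 : Primrec fun _ : ℕ => 1)
  have h1 : Primrec fun m : ℕ => m.unpair.1 := Primrec.fst.comp Primrec.unpair
  have h2 : Primrec fun m : ℕ => m.unpair.2 := Primrec.snd.comp Primrec.unpair
  have hp : PrimrecPred fun m : ℕ =>
      ψ m.unpair.1 = 0 ∧ ψ m.unpair.2 = 0 ∧ φ m.unpair.1 = φ m.unpair.2 :=
    (Primrec.eq.comp (hψ.comp h1) (Primrec.const 0)).and
      ((Primrec.eq.comp (hψ.comp h2) (Primrec.const 0)).and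
        (Primrec.eq.comp (hφ.comp h1) (hφ.comp h2)))
  refine ⟨fun m => decide (ψ m.unpair.1 = 0 ∧ ψ m.unpair.2 = 0 ∧ φ m.unpair.1 = φ m.unpair.2),
    hp.decide.to_comp, ?_⟩
  rintro ⟨s, t⟩
  rw [decide_eq_true_iff, Encodable.encode_prod_val, Nat.unpair_pair, hφ', hφ', hψ', hψ']
  constructor
  · rintro ⟨a, b, hab, h⟩
    obtain ⟨rfl, rfl⟩ := Prod.mk.inj h
    exact ⟨nvars_cl a, nvars_cl b, by rw [evalT_cl, evalT_cl]; exact hab⟩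
  · rintro ⟨hs, ht, h⟩
    obtain ⟨a, rfl⟩ := exists_cl_of_nvars s hs
    obtain ⟨b, rfl⟩ := exists_cl_of_nvars t ht
    exact ⟨a, b, by rwa [evalT_cl, evalT_cl] at h, rfl⟩

/-! ### Congruences on the closed terms -/

/-- Every set of elements of the algebra that contains `⊥` and is closed under the unary
operations is a final segment for the lexicographic order of the indices `(n, i)`, together with
`⊥`. Hence each such set is decidable, even though no uniform procedure exists. -/
theorem primrecPred_mem {J : Set ℕ} (h0 : 0 ∈ J)
    (hJ : ∀ o : Fin 3, ∀ a ∈ J, opA (o + 1) [a] ∈ J) : PrimrecPred fun x => x ∈ J := by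
  classical
  have hf : ∀ n i j, el n i ∈ J → el n (i + j) ∈ J := by
    intro n i j h
    induction j with
    | zero => exact h
    | succ j ih => simpa [opA_f, Nat.add_assoc] using hJ 0 _ ih
  have hg1 : ∀ n i, el n i ∈ J → el (n + 1) 0 ∈ J := by
    intro n i h
    simpa [opA_g] using hJ 1 _ h
  have hg : ∀ n i m j, el n i ∈ J → el (n + 1 + m) j ∈ J := by
    intro n i m j h
    have : el (n + 1 + m) 0 ∈ J := by
      induction m with
      | zero => exact hg1 n i h
      | succ m ih => exact hg1 _ _ ih
    simpa using hf _ _ j this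
  by_cases hex : ∃ n i, el n i ∈ J
  · have hex2 := Nat.find_spec hex
    set n₀ := Nat.find hex with hn₀
    set i₀ := Nat.find hex2 with hi₀
    have hmem : el n₀ i₀ ∈ J := Nat.find_spec hex2
    have hu : Primrec fun x : ℕ => (x - 1).unpair :=
      Primrec.unpair.comp (Primrec.nat_sub.comp Primrec.id (Primrec.const 1))
    have hp : PrimrecPred fun x : ℕ => x = 0 ∨ n₀ < (x - 1).unpair.1 ∨
        ((x - 1).unpair.1 = n₀ ∧ i₀ ≤ (x - 1).unpair.2) :=
      (Primrec.eq.comp Primrec.id (Primrec.const 0)).or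
        ((Primrec.nat_lt.comp (Primrec.const n₀) (Primrec.fst.comp hu)).or
          ((Primrec.eq.comp (Primrec.fst.comp hu) (Primrec.const n₀)).and
            (Primrec.nat_le.comp (Primrec.const i₀) (Primrec.snd.comp hu))))
    refine hp.of_eq fun x => ?_
    rcases eq_zero_or_el x with rfl | ⟨n, i, rfl⟩
    · simp [h0]
    · have e1 : (el n i - 1).unpair = (n, i) := by simp [el]
      rw [e1]
      constructor
      · rintro (h | h | ⟨h, h'⟩)
        · exact absurd h (el_ne_zero _ _)
        · obtain ⟨m, rfl⟩ := Nat.exists_eq_add_of_lt h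
          have := hg n₀ i₀ m i hmem
          rwa [show n₀ + 1 + m = n₀ + m + 1 by omega] at this
        · obtain ⟨j, rfl⟩ := Nat.exists_eq_add_of_le (show i₀ ≤ i from h')
          simp only at h
          exact h ▸ hf n₀ i₀ j hmem
      · intro h
        have h1 : n₀ ≤ n := Nat.find_min' hex ⟨i, h⟩
        rcases h1.lt_or_eq with h1 | h1
        · exact Or.inr (Or.inl h1)
        · refine Or.inr (Or.inr ⟨h1.symm, ?_⟩)
          exact Nat.find_min' hex2 (h1 ▸ h)
  · refine PrimrecPred.of_eq (Primrec.eq.comp Primrec.id (Primrec.const 0)) fun x => ?_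
    rcases eq_zero_or_el x with rfl | ⟨n, i, rfl⟩
    · simp [h0]
    · exact ⟨fun h => absurd h (el_ne_zero _ _), fun h => absurd ⟨n, i, h⟩ hex⟩

section Closed

variable {X : Type*} {R : Set (L5.Term X × L5.Term X)}

theorem law_cl {s t : L5.Term Empty} (h : val s = val t) :
    PresEqv laws R (cl s) (cl t) := by
  have := PresEqv.law (E := laws) (R := R) (cl s, cl t) (fun _ => tB) ⟨s, t, h, rfl⟩
  rwa [cl_subst, cl_subst] at this

theorem app_tU (o : Fin 3) {s t : L5.Term X} (h : PresEqv laws R s t) :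
    PresEqv laws R (tU o s) (tU o t) := PresEqv.app _ _ _ fun _ => h

theorem app_tD {s t s' t' : L5.Term X} (h : PresEqv laws R s t) (h' : PresEqv laws R s' t') :
    PresEqv laws R (tD s s') (tD t t') := by
  refine PresEqv.app _ _ _ fun i => ?_
  fin_cases i
  · exact h
  · exact h'

theorem tU_tB (o : Fin 3) : PresEqv laws R (tU o tB) tB := by
  have h : val (tU o tB : L5.Term Empty) = val (tB : L5.Term Empty) := by
    rw [val_tU, val_tB]
    apply opA_zero
    fin_cases o <;> simp
  simpa [cl_tU, cl_tB] using law_cl (R := R) h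

/-- The elements of the algebra which a presentation identifies with `⊥`. -/
def kill (R : Set (L5.Term X × L5.Term X)) : Set ℕ :=
  {a | ∃ s : L5.Term Empty, val s = a ∧ PresEqv laws R (cl s) tB}

theorem val_mem_kill {s : L5.Term Empty} :
    val s ∈ kill R ↔ PresEqv laws R (cl s) tB :=
  ⟨fun ⟨_, hs', h⟩ => (law_cl hs'.symm).trans h, fun h => ⟨s, rfl, h⟩⟩

theorem zero_mem_kill : 0 ∈ kill R := ⟨tB, val_tB, by rw [cl_tB]; exact PresEqv.refl _⟩

theorem opA_mem_kill (o : Fin 3) (a : ℕ) (ha : a ∈ kill R) : opA (o + 1) [a] ∈ kill R := by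
  obtain ⟨s, rfl, h⟩ := ha
  exact ⟨tU o s, rfl, (app_tU o h).trans (tU_tB o)⟩

open Classical in
/-- The normal form of an element of the algebra modulo a presentation. -/
noncomputable def canon (R : Set (L5.Term X × L5.Term X)) (a : ℕ) : ℕ :=
  if a ∈ kill R then 0 else a

theorem primrec_canon : Primrec (canon R) := by
  classical
  exact Primrec.ite (primrecPred_mem zero_mem_kill opA_mem_kill) (Primrec.const 0) Primrec.id

/-- Each closed term is equivalent to one whose value is in normal form. -/
theorem exists_val_eq_canon (s : L5.Term Empty) :
    ∃ s' : L5.Term Empty, PresEqv laws R (cl s) (cl s') ∧ val s' = canon R (val s) := by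
  by_cases h : val s ∈ kill R
  · exact ⟨tB, by rw [cl_tB]; exact val_mem_kill.1 h, by rw [canon, if_pos h, val_tB]⟩
  · exact ⟨s, PresEqv.refl _, by rw [canon, if_neg h]⟩

/-- A presentation that identifies two closed terms with distinct values `a`, `b` also identifies
`a = d(a, b)` with `⊥ = d(a, a)`: this is the purpose of the binary operation. -/
theorem mem_kill_of_ne {s t : L5.Term Empty} (h : PresEqv laws R (cl s) (cl t))
    (hne : val s ≠ val t) : val s ∈ kill R := by
  have h1 : PresEqv laws R (cl s) (cl (tD s t)) := law_cl (by rw [val_tD, if_neg hne])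
  have h2 : PresEqv laws R (cl (tD s t)) (cl (tD s s)) := by
    rw [cl_tD, cl_tD]
    exact app_tD (PresEqv.refl _) h.symm
  have h3 : PresEqv laws R (cl (tD s s)) (cl tB) :=
    law_cl (by rw [val_tD, if_pos rfl, val_tB])
  rw [val_mem_kill, ← cl_tB]
  exact (h1.trans h2).trans h3

theorem presEqv_cl_iff {s t : L5.Term Empty} :
    PresEqv laws R (cl s) (cl t) ↔ canon R (val s) = canon R (val t) := by
  constructor
  · intro h
    by_cases hne : val s = val t
    · rw [hne]
    · rw [canon, canon, if_pos (mem_kill_of_ne h hne), if_pos (mem_kill_of_ne h.symm (Ne.symm hne))]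
  · intro h
    obtain ⟨s', hs, hs'⟩ := exists_val_eq_canon (R := R) s
    obtain ⟨t', ht, ht'⟩ := exists_val_eq_canon (R := R) t
    exact (hs.trans (law_cl (by rw [hs', ht', h]))).trans ht.symm

end Closed

/-! ### Normal forms of arbitrary terms -/

section NormalForm

variable {k : ℕ} (R : Set (L5.Term (Fin k) × L5.Term (Fin k))) (T : List (L5.Term (Fin k)))

/-- The term is equivalent to a closed term. -/
def InA (t : L5.Term (Fin k)) : Prop := ∃ s : L5.Term Empty, PresEqv laws R t (cl s)

/-- The term is equivalent to a member of `T`. -/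
def InT (t : L5.Term (Fin k)) : Prop := ∃ u ∈ T, PresEqv laws R t u

/-- The term is a variable, or its outermost operation can be evaluated, either within the closed
terms or by appeal to a member of `T`. -/
def Eval1 : L5.Term (Fin k) → Prop
  | .var _ => True
  | .func f ts => (∀ i, InA R (ts i)) ∨
      ∃ us, Term.func f us ∈ T ∧ ∀ i, PresEqv laws R (ts i) (us i)

/-- Two terms with the same outermost operation symbol and equivalent arguments. -/
inductive SameHead : L5.Term (Fin k) → L5.Term (Fin k) → Prop
  | mk {n : ℕ} (f : L5.Functions n) (ts us : Fin n → L5.Term (Fin k))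
      (h : ∀ i, PresEqv laws R (ts i) (us i)) : SameHead (Term.func f ts) (Term.func f us)

/-- The finite list `T` contains the variables and the terms occurring in the relations. -/
def Covers : Prop := (∀ x, Term.var x ∈ T) ∧ ∀ p ∈ R, p.1 ∈ T ∧ p.2 ∈ T

variable {R T}

theorem InA.congr {s t : L5.Term (Fin k)} (h : PresEqv laws R s t) (ht : InA R t) : InA R s := by
  obtain ⟨a, ha⟩ := ht
  exact ⟨a, h.trans ha⟩

theorem InT.congr {s t : L5.Term (Fin k)} (h : PresEqv laws R s t) (ht : InT R T t) :
    InT R T s := by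
  obtain ⟨a, ha, ha'⟩ := ht
  exact ⟨a, ha, h.trans ha'⟩

theorem InA_func {n : ℕ} (f : L5.Functions n) {ts : Fin n → L5.Term (Fin k)}
    (h : ∀ i, InA R (ts i)) : InA R (Term.func f ts) := by
  choose s hs using h
  exact ⟨Term.func f s, PresEqv.app _ _ _ hs⟩

theorem eval1_cl (s : L5.Term Empty) : Eval1 R T (cl s) := by
  cases s with
  | var x => exact x.elim
  | func f ts => exact Or.inl fun i => ⟨ts i, PresEqv.refl _⟩

theorem eval1_of_mem {t : L5.Term (Fin k)} (h : t ∈ T) : Eval1 R T t := by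
  cases t with
  | var x => trivial
  | func f ts => exact Or.inr ⟨ts, h, fun i => PresEqv.refl _⟩

theorem SameHead.symm {s t : L5.Term (Fin k)} (h : SameHead R s t) : SameHead R t s := by
  cases h with
  | mk f ts us h => exact ⟨f, us, ts, fun i => (h i).symm⟩

theorem SameHead.eval1 {s t : L5.Term (Fin k)} (h : SameHead R s t) (ht : Eval1 R T t) :
    Eval1 R T s := by
  cases h with
  | mk f ts us h =>
    rcases ht with ht | ⟨vs, hv, hv'⟩
    · exact Or.inl fun i => (ht i).congr (h i)
    · exact Or.inr ⟨vs, hv, fun i => (h i).trans (hv' i)⟩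

/-- The analysis of the congruence: an equivalence between terms either takes place among terms
whose outermost operation can be evaluated, or comes from equivalences of the arguments. -/
theorem head_cases (hT : Covers R T) {s t : L5.Term (Fin k)} (h : PresEqv laws R s t) :
    (Eval1 R T s ∧ Eval1 R T t) ∨ SameHead R s t := by
  induction h with
  | rel h => exact Or.inl ⟨eval1_of_mem (hT.2 _ h).1, eval1_of_mem (hT.2 _ h).2⟩
  | law p σ hp =>
    obtain ⟨a, b, -, rfl⟩ := hp
    simp only [cl_subst]
    exact Or.inl ⟨eval1_cl _, eval1_cl _⟩
  | refl t =>
    cases t with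
    | var x => exact Or.inl ⟨trivial, trivial⟩
    | func f ts => exact Or.inr ⟨f, ts, ts, fun i => PresEqv.refl _⟩
  | symm _ ih => exact ih.imp And.symm SameHead.symm
  | trans _ _ ih1 ih2 =>
    rcases ih1 with ⟨a, b⟩ | h1
    · rcases ih2 with ⟨c, d⟩ | h2
      · exact Or.inl ⟨a, d⟩
      · exact Or.inl ⟨a, h2.symm.eval1 b⟩
    · rcases ih2 with ⟨c, d⟩ | h2
      · exact Or.inl ⟨h1.eval1 c, d⟩
      · cases h1 with
        | mk f ts us h1 =>
          cases h2 with
          | mk _ _ vs h2 => exact Or.inr ⟨f, ts, vs, fun i => (h1 i).trans (h2 i)⟩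
  | app f ts us h _ => exact Or.inr ⟨f, ts, us, h⟩

theorem eval1_of_inA_or_inT (hT : Covers R T) {t : L5.Term (Fin k)} (h : InA R t ∨ InT R T t) :
    Eval1 R T t := by
  rcases h with ⟨s, h⟩ | ⟨u, hu, h⟩
  · exact (head_cases hT h).elim And.left fun h => h.eval1 (eval1_cl _)
  · exact (head_cases hT h).elim And.left fun h => h.eval1 (eval1_of_mem hu)

variable (R)

/-- The congruence of the presentation, as a setoid. -/
def presSetoid : Setoid (L5.Term (Fin k)) :=
  ⟨PresEqv laws R, ⟨PresEqv.refl, PresEqv.symm, PresEqv.trans⟩⟩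

/-- The code of a chosen representative of the class of a term. -/
noncomputable def repCode (t : L5.Term (Fin k)) : ℕ :=
  Encodable.encode (Quotient.out (Quotient.mk (presSetoid R) t))

theorem repCode_eq_iff {s t : L5.Term (Fin k)} :
    repCode R s = repCode R t ↔ PresEqv laws R s t := by
  rw [repCode, repCode, Encodable.encode_inj, Quotient.out_inj]
  exact Quotient.eq (r := presSetoid R)

variable (T)

open Classical in
/-- The code of the normal form of a term: `⟨0, a⟩` for a term equivalent to a closed one, of
normalized value `a`; `⟨1, r⟩` for a variable or another term equivalent to a member of `T`, with
class representative `r`; otherwise `⟨2, ⟨o, l⟩⟩`, where `o` is the outermost symbol and `l` lists the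
normal forms of the arguments. -/
noncomputable def nf : L5.Term (Fin k) → ℕ
  | .var x =>
    if h : InA R (Term.var x) then Nat.pair 0 (canon R (val h.choose))
    else Nat.pair 1 (repCode R (Term.var x))
  | .func f ts =>
    if h : InA R (Term.func f ts) then Nat.pair 0 (canon R (val h.choose))
    else if InT R T (Term.func f ts) then Nat.pair 1 (repCode R (Term.func f ts))
    else Nat.pair 2 (Nat.pair (sym f) (Encodable.encode (List.ofFn fun i => nf (ts i))))

variable {R T}

theorem nf_inA {t : L5.Term (Fin k)} {s : L5.Term Empty} (h : PresEqv laws R t (cl s)) :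
    nf R T t = Nat.pair 0 (canon R (val s)) := by
  have hA : InA R t := ⟨s, h⟩
  have key : canon R (val hA.choose) = canon R (val s) :=
    presEqv_cl_iff.1 (hA.choose_spec.symm.trans h)
  cases t with
  | var x => rw [nf, dif_pos hA, key]
  | func f ts => rw [nf, dif_pos hA, key]

theorem nf_inT {t : L5.Term (Fin k)} (hA : ¬ InA R t) (h : InT R T t) :
    nf R T t = Nat.pair 1 (repCode R t) := by
  cases t with
  | var x => rw [nf, dif_neg hA]
  | func f ts => rw [nf, dif_neg hA, if_pos h]

theorem nf_free {n : ℕ} {f : L5.Functions n} {ts : Fin n → L5.Term (Fin k)}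
    (hA : ¬ InA R (Term.func f ts)) (h : ¬ InT R T (Term.func f ts)) :
    nf R T (Term.func f ts) =
      Nat.pair 2 (Nat.pair (sym f) (Encodable.encode (List.ofFn fun i => nf R T (ts i)))) := by
  rw [nf, dif_neg hA, if_neg h]

theorem nf_fst_eq_zero {t : L5.Term (Fin k)} : (nf R T t).unpair.1 = 0 ↔ InA R t := by
  constructor
  · intro h
    by_contra hA
    by_cases hT : InT R T t
    · rw [nf_inT hA hT] at h; simp at h
    · cases t with
      | var x => rw [nf, dif_neg hA] at h; simp at h
      | func f ts => rw [nf_free hA hT] at h; simp at h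
  · rintro ⟨s, hs⟩
    simp [nf_inA hs]

/-- Equivalent terms have equal normal forms, provided that `T` contains the variables and the terms
of the relations. -/
theorem nf_eq_of_presEqv (hT : Covers R T) {s : L5.Term (Fin k)} :
    ∀ {t : L5.Term (Fin k)}, PresEqv laws R s t → nf R T s = nf R T t := by
  induction s with
  | var x =>
    intro t h
    by_cases hA : InA R (Term.var x)
    · obtain ⟨a, ha⟩ := hA
      rw [nf_inA ha, nf_inA (h.symm.trans ha)]
    · have hx : InT R T (Term.var x) := ⟨_, hT.1 x, PresEqv.refl _⟩
      rw [nf_inT hA hx, nf_inT (fun h' => hA (h'.congr h)) (hx.congr h.symm),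
        (repCode_eq_iff R).2 h]
  | @func n f ts ih =>
    intro t h
    by_cases hA : InA R (Term.func f ts)
    · obtain ⟨a, ha⟩ := hA
      rw [nf_inA ha, nf_inA (h.symm.trans ha)]
    · have hA' : ¬ InA R t := fun h' => hA (h'.congr h)
      by_cases hx : InT R T (Term.func f ts)
      · rw [nf_inT hA hx, nf_inT hA' (hx.congr h.symm), (repCode_eq_iff R).2 h]
      · have hx' : ¬ InT R T t := fun h' => hx (h'.congr h)
        rcases head_cases hT h with ⟨h1, -⟩ | h1
        · rcases h1 with h1 | ⟨us, hu, hu'⟩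
          · exact absurd (InA_func f h1) hA
          · exact absurd ⟨_, hu, PresEqv.app _ _ _ hu'⟩ hx
        · cases h1 with
          | mk _ _ us h1 =>
            rw [nf_free hA hx, nf_free hA' hx', funext fun i => ih i (h1 i)]

theorem presEqv_of_nf_eq (hT : Covers R T) {s : L5.Term (Fin k)} :
    ∀ {t : L5.Term (Fin k)}, nf R T s = nf R T t → PresEqv laws R s t := by
  have main : ∀ {s t : L5.Term (Fin k)}, (InA R s ∨ InT R T s) → (InA R t ∨ InT R T t) →
      nf R T s = nf R T t → PresEqv laws R s t := by
    intro s t hs ht h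
    by_cases hA : InA R s
    · have hA' : InA R t := nf_fst_eq_zero.1 (h ▸ nf_fst_eq_zero.2 hA)
      obtain ⟨a, ha⟩ := hA
      obtain ⟨b, hb⟩ := hA'
      rw [nf_inA ha, nf_inA hb, Nat.pair_eq_pair] at h
      exact (ha.trans (presEqv_cl_iff.2 h.2)).trans hb.symm
    · have hA' : ¬ InA R t := fun h' => hA (nf_fst_eq_zero.1 (h ▸ nf_fst_eq_zero.2 h'))
      rw [nf_inT hA (hs.resolve_left hA), nf_inT hA' (ht.resolve_left hA'), Nat.pair_eq_pair] at h
      exact (repCode_eq_iff R).1 h.2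
  have two : ∀ {s t : L5.Term (Fin k)}, (InA R s ∨ InT R T s) → nf R T s = nf R T t →
      InA R t ∨ InT R T t := by
    intro s t hs h
    by_contra hn
    have hn' := not_or.1 hn
    cases t with
    | var x => exact hn'.2 ⟨_, hT.1 x, PresEqv.refl _⟩
    | func f ts =>
      rw [nf_free hn'.1 hn'.2] at h
      by_cases hA : InA R s
      · have := (nf_fst_eq_zero (T := T)).2 hA
        rw [h] at this
        simp at this
      · rw [nf_inT hA (hs.resolve_left hA), Nat.pair_eq_pair] at h
        exact absurd h.1 (by norm_num)
  induction s with
  | var x =>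
    intro t h
    have hx : InA R (Term.var x) ∨ InT R T (Term.var x) :=
      Or.inr ⟨_, hT.1 x, PresEqv.refl _⟩
    exact main hx (two hx h) h
  | @func n f ts ih =>
    intro t h
    by_cases hx : InA R (Term.func f ts) ∨ InT R T (Term.func f ts)
    · exact main hx (two hx h) h
    · have hx' : ¬ (InA R t ∨ InT R T t) := fun h' => hx (two h' h.symm)
      cases t with
      | var y => exact absurd (Or.inr ⟨_, hT.1 y, PresEqv.refl _⟩) hx'
      | @func m g us =>
        rw [nf_free (not_or.1 hx).1 (not_or.1 hx).2, nf_free (not_or.1 hx').1 (not_or.1 hx').2,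
          Nat.pair_eq_pair, Nat.pair_eq_pair, Encodable.encode_inj] at h
        obtain ⟨-, h1, h2⟩ := h
        have hnm : n = m := by rw [← ar_sym f, ← ar_sym g, Fin.ext h1]
        subst hnm
        obtain rfl := sym_inj h1
        exact PresEqv.app _ _ _ fun i => ih i (congrFun (List.ofFn_injective h2) i)

/-! ### Decidability for a fixed presentation -/

/-- The value attached to a key in an association list, increased by `1`; `0` if there is none. -/
def lk {α : Type*} [DecidableEq α] : List (α × ℕ) → α → ℕ
  | [], _ => 0
  | p :: l, x => if x = p.1 then p.2 + 1 else lk l x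

theorem primrec_lk {α : Type*} [Primcodable α] [DecidableEq α] (l : List (α × ℕ)) :
    Primrec (lk l) := by
  induction l with
  | nil => exact Primrec.const 0
  | cons p l ih =>
    exact Primrec.ite (Primrec.eq.comp Primrec.id (Primrec.const p.1)) (Primrec.const _) ih

theorem lk_spec {α : Type*} [DecidableEq α] (l : List (α × ℕ)) (x : α) :
    (lk l x = 0 ∧ ∀ v, (x, v) ∉ l) ∨ ∃ v, (x, v) ∈ l ∧ lk l x = v + 1 := by
  induction l with
  | nil => exact Or.inl ⟨rfl, by simp⟩
  | cons p l ih =>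
    by_cases h : x = p.1
    · exact Or.inr ⟨p.2, by simp [h], by simp [lk, h]⟩
    · rcases ih with ⟨h1, h2⟩ | ⟨v, h1, h2⟩
      · refine Or.inl ⟨by simp [lk, h, h1], fun v hv => ?_⟩
        rcases List.mem_cons.1 hv with rfl | hv
        · exact h rfl
        · exact h2 v hv
      · exact Or.inr ⟨v, List.mem_cons_of_mem _ h1, by simp [lk, h, h2]⟩

variable (R T)

/-- The finite table of the operations whose result is a member of `T`: it sends an operation
symbol with the normal forms of its arguments to the normal form of the result. -/
noncomputable def table : List ((ℕ × List ℕ) × ℕ) :=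
  T.flatMap fun
    | .var _ => []
    | .func f us => [((((sym f : Fin 5) : ℕ), List.ofFn fun i => nf R T (us i)),
        nf R T (Term.func f us))]

/-- The operations on codes of normal forms. -/
noncomputable def opN (o : ℕ) (l : List ℕ) : ℕ :=
  if ∀ v ∈ l, v.unpair.1 = 0 then
    Nat.pair 0 (canon R (opA o (l.map fun v => v.unpair.2)))
  else if lk (table R T) (o, l) = 0 then Nat.pair 2 (Nat.pair o (Encodable.encode l))
  else lk (table R T) (o, l) - 1

theorem primrec_opN : Primrec₂ (opN R T) := by
  have hl : Primrec fun p : ℕ × List ℕ => lk (table R T) (p.1, p.2) := primrec_lk _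
  have hall : PrimrecPred fun p : ℕ × List ℕ => ∀ v ∈ p.2, v.unpair.1 = 0 :=
    (PrimrecPred.forall_mem_list (Primrec.eq.comp (Primrec.fst.comp Primrec.unpair)
      (Primrec.const 0))).comp Primrec.snd
  refine Primrec.ite hall ?_ (Primrec.ite (Primrec.eq.comp hl (Primrec.const 0)) ?_ ?_)
  · exact Primrec₂.natPair.comp (Primrec.const 0) (primrec_canon.comp (primrec_opA.comp Primrec.fst
      (Primrec.list_map Primrec.snd
        ((Primrec.snd.comp Primrec.unpair).comp₂ Primrec₂.right))))
  · exact Primrec₂.natPair.comp (Primrec.const 2)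
      (Primrec₂.natPair.comp Primrec.fst (Primrec.encode.comp Primrec.snd))
  · exact Primrec.nat_sub.comp hl (Primrec.const 1)

variable {R T}

theorem mem_table {o : ℕ} {l : List ℕ} {v : ℕ} :
    ((o, l), v) ∈ table R T ↔ ∃ (n : ℕ) (f : L5.Functions n) (us : Fin n → L5.Term (Fin k)),
      Term.func f us ∈ T ∧ o = sym f ∧ l = List.ofFn (fun i => nf R T (us i)) ∧
        v = nf R T (Term.func f us) := by
  rw [table, List.mem_flatMap]
  constructor
  · rintro ⟨u, hu, h⟩
    cases u with
    | var x => simp at h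
    | @func n f us =>
      simp only [List.mem_singleton, Prod.mk.injEq] at h
      exact ⟨n, f, us, hu, h.1.1, h.1.2, h.2⟩
  · rintro ⟨n, f, us, hu, rfl, rfl, rfl⟩
    exact ⟨_, hu, by simp⟩

/-- Normal forms are computed from the outermost symbol and the normal forms of the arguments. -/
theorem nf_func (hT : Covers R T) {n : ℕ} (f : L5.Functions n) (ts : Fin n → L5.Term (Fin k)) :
    nf R T (Term.func f ts) = opN R T (sym f) (List.ofFn fun i => nf R T (ts i)) := by
  by_cases hA : ∀ i, InA R (ts i)
  · have hall : ∀ v ∈ List.ofFn (fun i => nf R T (ts i)), v.unpair.1 = 0 := by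
      intro v hv
      obtain ⟨i, rfl⟩ := (List.mem_ofFn' _ _).1 hv
      exact nf_fst_eq_zero.2 (hA i)
    have hs : ∀ i, ∃ s : L5.Term Empty, PresEqv laws R (ts i) (cl s) ∧
        nf R T (ts i) = Nat.pair 0 (val s) := by
      intro i
      obtain ⟨s, hs⟩ := hA i
      obtain ⟨s', h1, h2⟩ := exists_val_eq_canon (R := R) s
      exact ⟨s', hs.trans h1, by rw [nf_inA hs, h2]⟩
    choose s hs hs' using hs
    have h1 : PresEqv laws R (Term.func f ts) (cl (Term.func f s)) := PresEqv.app _ _ _ hs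
    rw [opN, if_pos hall, nf_inA h1, List.map_ofFn]
    have h2 : ((fun v : ℕ => v.unpair.2) ∘ fun i => nf R T (ts i)) = fun i => val (s i) := by
      funext i
      simp [hs']
    rw [h2]
    rfl
  · have hall : ¬ ∀ v ∈ List.ofFn (fun i => nf R T (ts i)), v.unpair.1 = 0 := fun h =>
      hA fun i => nf_fst_eq_zero.1 (h _ ((List.mem_ofFn' _ _).2 ⟨i, rfl⟩))
    have hkey : ∀ {us : Fin n → L5.Term (Fin k)},
        List.ofFn (fun i => nf R T (ts i)) = List.ofFn (fun i => nf R T (us i)) →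
        ∀ i, PresEqv laws R (ts i) (us i) := fun h i =>
      presEqv_of_nf_eq hT (congrFun (List.ofFn_injective h) i)
    rw [opN, if_neg hall]
    rcases lk_spec (table R T) (((sym f : Fin 5) : ℕ), List.ofFn fun i => nf R T (ts i))
      with ⟨h1, h2⟩ | ⟨v, h1, h2⟩
    · rw [if_pos h1]
      have hn : ¬ (InA R (Term.func f ts) ∨ InT R T (Term.func f ts)) := by
        intro h
        rcases eval1_of_inA_or_inT hT h with h | ⟨us, hu, hu'⟩
        · exact hA h
        · refine h2 _ (mem_table.2 ⟨n, f, us, hu, rfl, ?_, rfl⟩)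
          rw [funext fun i => nf_eq_of_presEqv hT (hu' i)]
      exact nf_free (not_or.1 hn).1 (not_or.1 hn).2
    · rw [h2, if_neg (Nat.succ_ne_zero v), Nat.add_sub_cancel]
      obtain ⟨m, g, us, -, ho, hl, rfl⟩ := mem_table.1 h1
      have hnm : n = m := by rw [← ar_sym f, ← ar_sym g, Fin.ext ho]
      subst hnm
      obtain rfl := sym_inj ho
      exact nf_eq_of_presEqv hT (PresEqv.app _ _ _ (hkey hl))

theorem nf_eq_evalT (hT : Covers R T) (t : L5.Term (Fin k)) :
    nf R T t =
      evalT (opN R T) (fun x => (List.ofFn fun i : Fin k => nf R T (Term.var i)).getD x 0) t := by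
  induction t with
  | var x =>
    have hx : (Encodable.encode x : ℕ) = x := rfl
    simp [evalT, hx]
  | func f ts ih => rw [nf_func hT, evalT, funext ih]

end NormalForm

theorem laws_solvable : SolvableWP L5 laws := by
  intro k R
  set R' : Set (L5.Term (Fin k) × L5.Term (Fin k)) := {p | p ∈ R} with hR'
  let T : List (L5.Term (Fin k)) :=
    (List.finRange k).map Term.var ++ (R.map Prod.fst ++ R.map Prod.snd)
  have hT : Covers R' T := by
    refine ⟨fun x => by simp [T], fun p hp => ?_⟩
    have hp : p ∈ R := hp
    exact ⟨List.mem_append_right _ (List.mem_append_left _ (List.mem_map_of_mem hp)),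
      List.mem_append_right _ (List.mem_append_right _ (List.mem_map_of_mem hp))⟩
  obtain ⟨φ, hφ, hφ'⟩ := exists_primrec_evalT (N := 5) (ar := ar5) (Fin k) (primrec_opN R' T)
    (G := fun x => (List.ofFn fun i : Fin k => nf R' T (Term.var i)).getD x 0)
    ((Primrec.list_getD 0).comp (Primrec.const _) Primrec.id)
  have hp : PrimrecPred fun m : ℕ => φ m.unpair.1 = φ m.unpair.2 :=
    Primrec.eq.comp (hφ.comp (Primrec.fst.comp Primrec.unpair))
      (hφ.comp (Primrec.snd.comp Primrec.unpair))
  refine ⟨fun m => decide (φ m.unpair.1 = φ m.unpair.2), hp.decide.to_comp, fun s t => ?_⟩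
  rw [decide_eq_true_iff, Nat.unpair_pair, hφ', hφ', ← nf_eq_evalT hT, ← nf_eq_evalT hT]
  exact ⟨nf_eq_of_presEqv hT, presEqv_of_nf_eq hT⟩

/-! ### Failure of uniformity -/

/-- The closed term denoting `e(n, 0)`. -/
def gt {X : Type*} : ℕ → L5.Term X
  | 0 => tC
  | n + 1 => tU 1 (gt n)

/-- The closed term denoting `e(n, i)`. -/
def ft {X : Type*} (n : ℕ) : ℕ → L5.Term X
  | 0 => gt n
  | i + 1 => tU 0 (ft n i)

theorem val_gt {X : Type*} [Encodable X] (n : ℕ) : val (gt n : L5.Term X) = el n 0 := by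
  induction n with
  | zero => rfl
  | succ n ih => rw [gt, val_tU, ih]; exact opA_g n 0

theorem val_ft {X : Type*} [Encodable X] (n i : ℕ) : val (ft n i : L5.Term X) = el n i := by
  induction i with
  | zero => exact val_gt n
  | succ i ih => rw [ft, val_tU, ih]; exact opA_f n i

theorem cl_gt {X : Type*} (n : ℕ) : cl (gt n) = (gt n : L5.Term X) := by
  induction n with
  | zero => exact cl_tC
  | succ n ih => rw [gt, cl_tU, ih]; rfl

theorem cl_ft {X : Type*} (n i : ℕ) : cl (ft n i) = (ft n i : L5.Term X) := by
  induction i with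
  | zero => exact cl_gt n
  | succ i ih => rw [ft, cl_tU, ih]; rfl

/-- If program `n` halts, then killing `e(n, 1)` kills `e(n, 0)`. -/
theorem presEqv_of_halts {X : Type*} {R : Set (L5.Term X × L5.Term X)} {n i : ℕ}
    (hR : (tU 0 (gt n), tB) ∈ R) (h : halts n i = true) : PresEqv laws R (gt n) tB := by
  have h1 : ∀ j, PresEqv laws R (ft n (j + 1)) tB := by
    intro j
    induction j with
    | zero => exact PresEqv.rel hR
    | succ j ih => exact (app_tU 0 ih).trans (tU_tB 0)
  have h2 : PresEqv laws R (cl (gt n)) (cl (tU 2 (ft n (i + 1)))) := by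
    refine law_cl ?_
    rw [val_gt, val_tU, val_ft]
    exact ((opA_h n (i + 1)).trans (if_pos (halts_mono (Nat.le_succ i) h))).symm
  rw [cl_gt, cl_tU, cl_ft] at h2
  exact (h2.trans (app_tU 2 (h1 i))).trans (tU_tB 2)

/-- The elements `e(m, j)` with `(m, j)` lexicographically at least `(n, 1)`, together with `⊥`. -/
def seg (n : ℕ) : Set ℕ := {x | x = 0 ∨ ∃ m j, x = el m j ∧ (n < m ∨ (m = n ∧ 1 ≤ j))}

/-- If program `n` does not halt, then every operation other than the constant takes values in
`seg n` when its first argument lies there: only the third unary operation could lead back to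
`e(n, 0)`. -/
theorem opA_mem_seg {n : ℕ} (hn : ∀ i, ¬ halts n i = true) {o : ℕ} {l : List ℕ} (h0 : o ≠ 0)
    (h : l.getD 0 0 ∈ seg n) : opA o l ∈ seg n := by
  have hz : (0 : ℕ) ∈ seg n := Or.inl rfl
  rw [opA, if_neg h0]
  generalize l.getD 0 0 = x at h ⊢
  split_ifs with h1 h2 h3 h4 h5 h6
  · exact hz
  · exact h
  · exact hz
  all_goals
    rcases h with rfl | ⟨m, j, rfl, h⟩
    · exact absurd rfl h3
    have e1 : (el m j - 1).unpair = (m, j) := by simp [el]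
    simp only [e1] at *
  · exact Or.inr ⟨m, j + 1, rfl, by omega⟩
  · exact Or.inr ⟨m + 1, 0, rfl, by omega⟩
  · refine Or.inr ⟨m, 0, rfl, Or.inl ?_⟩
    rcases h with h | ⟨rfl, -⟩
    · exact h
    · exact absurd h6 (hn j)
  · exact hz

/-- If program `n` does not halt, then the elements of `seg n` can be collapsed to `⊥` without
any further identification. -/
theorem sim_opA {n : ℕ} (hn : ∀ i, ¬ halts n i = true) (o : ℕ) {l l' : List ℕ}
    (h : ∀ j, l.getD j 0 = l'.getD j 0 ∨ (l.getD j 0 ∈ seg n ∧ l'.getD j 0 ∈ seg n)) :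
    opA o l = opA o l' ∨ (opA o l ∈ seg n ∧ opA o l' ∈ seg n) := by
  by_cases h0 : o = 0
  · left; simp [opA, h0]
  rcases h 0 with hx | ⟨hx, hx'⟩
  · by_cases hs : l.getD 0 0 ∈ seg n
    · exact Or.inr ⟨opA_mem_seg hn h0 hs, opA_mem_seg hn h0 (hx ▸ hs)⟩
    · left
      rw [opA, opA, ← hx]
      rcases h 1 with hy | ⟨hy, hy'⟩
      · rw [hy]
      · rw [if_neg (fun e : l.getD 0 0 = l.getD 1 0 => hs (e ▸ hy)),
          if_neg (fun e : l.getD 0 0 = l'.getD 1 0 => hs (e ▸ hy'))]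
  · exact Or.inr ⟨opA_mem_seg hn h0 hx, opA_mem_seg hn h0 hx'⟩

theorem sim_of_presEqv {X : Type*} [Encodable X] {n : ℕ} (hn : ∀ i, ¬ halts n i = true)
    {R : Set (L5.Term X × L5.Term X)} (hR : ∀ p ∈ R, p = (tU 0 (gt n), tB)) {s t : L5.Term X}
    (h : PresEqv laws R s t) : val s = val t ∨ (val s ∈ seg n ∧ val t ∈ seg n) := by
  induction h with
  | rel h =>
    obtain ⟨rfl, rfl⟩ := Prod.mk.inj (hR _ h)
    refine Or.inr ⟨Or.inr ⟨n, 1, ?_, Or.inr ⟨rfl, le_rfl⟩⟩, Or.inl val_tB⟩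
    exact val_ft n 1
  | law p σ hp =>
    obtain ⟨a, b, hab, rfl⟩ := hp
    left
    rw [cl_subst, cl_subst, val_cl, val_cl, hab]
  | refl t => exact Or.inl rfl
  | symm _ ih => exact ih.imp Eq.symm And.symm
  | trans _ _ ih1 ih2 =>
    rcases ih1 with h1 | h1
    · rwa [h1]
    · rcases ih2 with h2 | h2
      · exact Or.inr (h2 ▸ h1)
      · exact Or.inr ⟨h1.1, h2.2⟩
  | @app m f ts us _ ih =>
    refine sim_opA hn _ fun j => ?_
    by_cases hj : j < m
    · simpa [hj, val] using ih ⟨j, hj⟩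
    · left; simp [hj]

/-- Under the single relation `e(n, 1) = ⊥`, the equation `e(n, 0) = ⊥` expresses the halting of
program `n`. -/
theorem presEqv_iff_halts {X : Type*} [Encodable X] {n : ℕ} {R : Set (L5.Term X × L5.Term X)}
    (hR : ∀ p, p ∈ R ↔ p = (tU 0 (gt n), tB)) :
    PresEqv laws R (gt n) tB ↔ ∃ i, halts n i = true := by
  constructor
  · intro h
    by_contra hn
    rw [not_exists] at hn
    rcases sim_of_presEqv hn (fun p hp => (hR p).1 hp) h with h | ⟨h, -⟩
    · rw [val_gt, val_tB] at h
      exact el_ne_zero _ _ h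
    · rw [val_gt] at h
      rcases h with h | ⟨m, j, h, h'⟩
      · exact el_ne_zero _ _ h
      · have := el_inj.1 h
        omega
  · rintro ⟨i, hi⟩
    exact presEqv_of_halts ((hR _).2 rfl) hi

theorem encode_tU {X : Type*} [Encodable X] (o : Fin 3) (t : L5.Term X) :
    Encodable.encode (tU o t) =
      Nat.succ (Nat.pair (2 * Nat.pair 1 (o + 1) + 1) (Encodable.encode t)) := by
  have h : (tU o t).listEncode
      = Sum.inr (⟨1, uSym o⟩ : Σ i, L5.Functions i) :: t.listEncode := by
    rw [tU, Term.listEncode]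
    simp [List.finRange_succ]
  rw [encode_term, encode_term, h, List.map_cons, Encodable.encode_list_cons]
  rfl

theorem primrec_encode_tU {X : Type*} [Encodable X] (o : Fin 3) {t : ℕ → L5.Term X}
    (ht : Primrec fun n => Encodable.encode (t n)) :
    Primrec fun n => Encodable.encode (tU o (t n)) := by
  simp only [encode_tU]
  exact Primrec.succ.comp (Primrec₂.natPair.comp (Primrec.const _) ht)

theorem primrec_encode_gt (X : Type*) [Encodable X] :
    Primrec fun n => Encodable.encode (gt n : L5.Term X) := by
  refine (Primrec.nat_rec₁ (Encodable.encode (tC : L5.Term X))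
    (f := fun _ c => Nat.succ (Nat.pair (2 * Nat.pair 1 ((1 : Fin 3) + 1) + 1) c))
    (Primrec.succ.comp (Primrec₂.natPair.comp (Primrec.const _) Primrec.snd))).of_eq fun n => ?_
  induction n with
  | zero => rfl
  | succ n ih => rw [gt, encode_tU, ← ih]

theorem laws_not_uniform : ¬ UniformWP L5 laws := by
  rintro ⟨f, hf, hf'⟩
  let q : ℕ → Σ k : ℕ, List (L5.Term (Fin k) × L5.Term (Fin k)) × L5.Term (Fin k) × L5.Term (Fin k) :=
    fun n => ⟨0, ([(tU 0 (gt n), tB)], gt n, tB)⟩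
  have hq : Primrec fun n => Encodable.encode (q n) := by
    have hg := primrec_encode_gt (Fin 0)
    have h1 : Primrec fun n => Nat.pair 0 (Nat.pair
        (Nat.succ (Nat.pair (Nat.pair (Encodable.encode (tU 0 (gt n) : L5.Term (Fin 0)))
          (Encodable.encode (tB : L5.Term (Fin 0)))) 0))
        (Nat.pair (Encodable.encode (gt n : L5.Term (Fin 0)))
          (Encodable.encode (tB : L5.Term (Fin 0))))) :=
      Primrec₂.natPair.comp (Primrec.const 0) (Primrec₂.natPair.comp
        (Primrec.succ.comp (Primrec₂.natPair.comp (Primrec₂.natPair.comp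
          (primrec_encode_tU 0 hg) (Primrec.const _)) (Primrec.const 0)))
        (Primrec₂.natPair.comp hg (Primrec.const _)))
    exact h1.of_eq fun n => rfl
  refine ComputablePred.halting_problem 0 (ComputablePred.computable_iff.2
    ⟨fun c => f (Encodable.encode (q (Encodable.encode c))),
      hf.comp (hq.to_comp.comp Computable.encode), funext fun c => propext ?_⟩)
  rw [← hf', presEqv_iff_halts (n := Encodable.encode c) (fun p => by simp), exists_halts_iff,
    Denumerable.ofNat_encode]

end ConstLaws

/-- There is a variety in a finite algebraic signature, defined by a recursive set of laws
involving only constants (equations between closed terms), which has solvable but not uniformly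
solvable word problem. -/
theorem exists_recursively_based_constant_law_variety_solvable_not_uniformly_solvable :
    ∃ (N : ℕ) (ar : Fin N → ℕ)
      (E : Set ((FinLang N ar).Term ℕ × (FinLang N ar).Term ℕ)),
      (∀ p ∈ E, IsClosedTerm p.1 ∧ IsClosedTerm p.2) ∧
      DecidableSetVia E ∧
      SolvableWP (FinLang N ar) E ∧
      ¬ UniformWP (FinLang N ar) E := by
  exact ⟨5, ConstLaws.ar5, ConstLaws.laws, ConstLaws.laws_closed, ConstLaws.laws_decidable,
    ConstLaws.laws_solvable, ConstLaws.laws_not_uniform⟩
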